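/- There exists a constant C > 0 such that for every n ≥ 0, ∑_{v∈ℤ^d} |x_n(v)| ≤ C. (The ℓ¹ norms, i.e. the total variations of the signed measures defined by the Jacobi polynomial iteration, are bounded uniformly in n.) -/

import Mathlib

open MeasureTheory Matrix Filter Topology Real

noncomputable section

def latticeConv {d : ℕ} (ω x : (Fin d → ℤ) → ℝ) : (Fin d → ℤ) → ℝ :=
  fun v => ∑' η : Fin d → ℤ, ω (v - η) * x η

def covQ (d : ℕ) (ω : (Fin d → ℤ) → ℝ) : Matrix (Fin d) (Fin d) ℝ :=
  Matrix.of fun i j => ∑' v : Fin d → ℤ, ω v * (v i : ℝ) * (v j : ℝ)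

def ftOmega {d : ℕ} (ω : (Fin d → ℤ) → ℝ) (ξ : Fin d → ℝ) : ℂ :=
  ∑' v : Fin d → ℤ, (ω v : ℂ) * Complex.exp (Complex.I * ((∑ i, ξ i * (v i : ℝ) : ℝ) : ℂ))

def aCoef0 (d : ℕ) : ℝ := ((d : ℝ) + 4) / (2 * (2 + (d : ℝ)))
def bCoef0 (d : ℕ) : ℝ := (d : ℝ) / (2 * (2 + (d : ℝ)))
def aCoef (d n : ℕ) : ℝ :=
  (2 * (n : ℝ) + (d : ℝ)/2 + 1) * (2 * (n : ℝ) + (d : ℝ)/2 + 2) / (2 * ((n : ℝ) + 1 + (d : ℝ)/2)^2)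
def bCoef (d n : ℕ) : ℝ :=
  (d : ℝ)^2 * (2 * (n : ℝ) + (d : ℝ)/2 + 1) / (8 * ((n : ℝ) + 1 + (d : ℝ)/2)^2 * (2 * (n : ℝ) + (d : ℝ)/2))
def cCoef (d n : ℕ) : ℝ :=
  (n : ℝ)^2 * (2 * (n : ℝ) + (d : ℝ)/2 + 2) / (((n : ℝ) + 1 + (d : ℝ)/2)^2 * (2 * (n : ℝ) + (d : ℝ)/2))

def besselJ (ν z : ℝ) : ℝ :=
  ∑' m : ℕ, ((-1 : ℝ)^m / ((m.factorial : ℝ) * Real.Gamma ((m : ℝ) + ν + 1))) * (z / 2) ^ (2 * (m : ℝ) + ν)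

def jacobiP (α β : ℝ) (n : ℕ) (x : ℝ) : ℝ :=
  ∑ s ∈ Finset.range (n + 1),
    (Real.Gamma ((n : ℝ) + α + 1) / (Real.Gamma (α + (s : ℝ) + 1) * ((n - s).factorial : ℝ))) *
    (Real.Gamma ((n : ℝ) + β + 1) / (Real.Gamma ((n : ℝ) + β - (s : ℝ) + 1) * (s.factorial : ℝ))) *
    ((x - 1) / 2) ^ s * ((x + 1) / 2) ^ (n - s)

def jacobiPi (α β : ℝ) (n : ℕ) (x : ℝ) : ℝ := jacobiP α β n x / jacobiP α β n 1

def pd {d : ℕ} (j : Fin d) (g : (Fin d → ℝ) → ℝ) : (Fin d → ℝ) → ℝ :=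
  fun y => deriv (fun s => g (Function.update y j s)) (y j)

/-!
The Fourier transform of `x n` is `πₙ(ω̂)`, where `πₙ` is the Jacobi polynomial `Pₙ^(d/2, 0)`
normalized by `πₙ(1) = 1`. As a solution of the Jacobi equation, `πₙ` has a Sonin-type energy;
the weighted monotonicity of this energy, after a small correction that spreads its dissipation over
both of its terms, gives `πₙ(t)² ≲ (1 + n² (1 - t))^(-(d/2 + 1/4))` for `t` bounded away from `-1`.
Aperiodicity and the nondegeneracy of the covariance keep `ω̂` away from `-1` and give
`1 - ω̂(ξ) ≳ ‖ξ‖²` on `[-π, π]^d`. The decay exponent exceeds `d/2`, so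
`(1 + ‖n ξ‖²)^(-(d/2 + 1/4))` has integral of order `n^(-d)`, and Parseval yields
`∑ v, x n v ^ 2 ≲ n^(-d)`. Since `x n` is supported on `O(n^d)` lattice points, the Cauchy–Schwarz
inequality bounds its `ℓ¹` norm.
-/

section RecurrencePolynomials

open Polynomial

/-- The normalized Jacobi polynomials `πₙ = Pₙ^(d/2, 0) / Pₙ^(d/2, 0)(1)`, encoded by the three-term
recurrence with the coefficients of the Jacobi polynomial iteration. -/
def normalizedJacobi (d : ℕ) : ℕ → ℝ[X]
  | 0 => 1
  | 1 => C (aCoef0 d) * X + C (bCoef0 d)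
  | n + 2 => (C (aCoef d (n + 1)) * X + C (bCoef d (n + 1))) * normalizedJacobi d (n + 1)
      - C (cCoef d (n + 1)) * normalizedJacobi d n

variable (d n : ℕ) {α : ℝ}

lemma normalizedJacobi_add_two_cleared (hα : α = d / 2) :
    C (2 * (n + 2 + α) ^ 2 * (2 * n + 2 + α)) * normalizedJacobi d (n + 2) =
      (C ((2 * n + α + 3) * (2 * n + α + 4) * (2 * n + 2 + α)) * X + C (α ^ 2 * (2 * n + α + 3))) *
          normalizedJacobi d (n + 1)
        - C (2 * (n + 1) ^ 2 * (2 * n + α + 4)) * normalizedJacobi d n := by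
  have hα0 : 0 ≤ α := hα ▸ by positivity
  have hd : (d : ℝ) = 2 * α := by linarith
  have ha : (2 * n + α + 3) * (2 * n + α + 4) * (2 * n + 2 + α) =
      2 * (n + 2 + α) ^ 2 * (2 * n + 2 + α) * aCoef d (n + 1) := by
    simp only [aCoef, hd]; push_cast; field_simp; ring
  have hb : α ^ 2 * (2 * n + α + 3) =
      2 * (n + 2 + α) ^ 2 * (2 * n + 2 + α) * bCoef d (n + 1) := by
    simp only [bCoef, hd]; push_cast; field_simp; ring
  have hc : 2 * (n + 1) ^ 2 * (2 * n + α + 4) =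
      2 * (n + 2 + α) ^ 2 * (2 * n + 2 + α) * cCoef d (n + 1) := by
    simp only [cCoef, hd]; push_cast; field_simp; ring
  rw [ha, hb, hc, normalizedJacobi]
  simp only [C_mul]
  ring

/-- Simultaneous induction: each structure relation at stage `n + 1` needs both at stage `n`. -/
lemma normalizedJacobi_structure_relations (hα : α = d / 2) (x : ℝ) :
    (2 * n + α + 2) * (1 - x ^ 2) * (derivative (normalizedJacobi d n)).eval x =
        (n + α + 1) * (α + (2 * n + α + 2) * x) * (normalizedJacobi d n).eval x
          - 2 * (n + α + 1) ^ 2 * (normalizedJacobi d (n + 1)).eval x ∧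
      (2 * n + α + 2) * (1 - x ^ 2) * (derivative (normalizedJacobi d (n + 1))).eval x =
        (n + 1) * (α - (2 * n + α + 2) * x) * (normalizedJacobi d (n + 1)).eval x
          + 2 * (n + 1) ^ 2 * (normalizedJacobi d n).eval x := by
  have hα0 : 0 ≤ α := hα ▸ by positivity
  induction n with
  | zero =>
    have hd : (d : ℝ) = 2 * α := by linarith
    have h₁ : 1 + α ≠ 0 := by positivity
    simp only [normalizedJacobi, aCoef0, bCoef0, hd]
    constructor <;>
      simp only [Nat.cast_zero, mul_zero, zero_mul, zero_add, add_zero, one_mul, mul_one, one_pow,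
        derivative_one, derivative_add, derivative_mul, derivative_C, derivative_X, eval_add,
        eval_mul, eval_C, eval_X, eval_zero, eval_one] <;>
      field_simp <;>
      ring
  | succ n ih =>
    obtain ⟨hlower, hraise⟩ := ih
    have hrec := normalizedJacobi_add_two_cleared d n hα
    have heval := congrArg (eval x) hrec
    have hderiv := congrArg (fun p ↦ (derivative p).eval x) hrec
    simp only [derivative_mul, derivative_add, derivative_sub, derivative_C, derivative_X, eval_add,
      eval_sub, eval_mul, eval_C, eval_X, eval_zero, eval_one] at heval hderiv
    have h₁ : (2 * n + 2 + α : ℝ) ≠ 0 := by positivity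
    have h₂ : 2 * (n + 2 + α) ^ 2 * (2 * n + 2 + α) ≠ 0 := by positivity
    push_cast
    constructor
    · apply mul_left_cancel₀ h₁
      linear_combination (2 * n + α + 4) * hraise + heval
    · apply mul_left_cancel₀ h₁
      apply mul_left_cancel₀ h₂
      linear_combination (2 * n + α + 4) * (1 - x ^ 2) * (2 * n + 2 + α) * hderiv
        + (2 * n + α + 4) * ((2 * n + α + 3) * (2 * n + α + 4) * (2 * n + 2 + α) * x
          + α ^ 2 * (2 * n + α + 3)) * hraise
        - (2 * n + α + 4) * (2 * (n + 1) ^ 2 * (2 * n + α + 4)) * hlower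
        - (2 * n + 2 + α) * (n + 2) * (α - (2 * n + α + 4) * x) * heval

lemma normalizedJacobi_eval_one : (normalizedJacobi d n).eval 1 = 1 := by
  induction n with
  | zero => simp [normalizedJacobi]
  | succ n ih =>
    have hlower := (normalizedJacobi_structure_relations d n rfl 1).1
    rw [ih] at hlower
    have h : 2 * (n + (d : ℝ) / 2 + 1) ^ 2 ≠ 0 := by positivity
    apply mul_left_cancel₀ h
    linear_combination hlower

end RecurrencePolynomials

section JacobiEquation

/-- `f` solves the Jacobi differential equation with parameters `(α, 0)` and eigenvalue `μ` on
`(-1, 1)`, and is regular up to the endpoints; `f'` and `f''` are its derivatives. -/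
structure IsJacobiSolution (α μ : ℝ) (f f' f'' : ℝ → ℝ) : Prop where
  hasDerivAt : ∀ x ∈ Set.Icc (-1 : ℝ) 1, HasDerivAt f (f' x) x
  hasDerivAt_deriv : ∀ x ∈ Set.Icc (-1 : ℝ) 1, HasDerivAt f' (f'' x) x
  ode : ∀ x ∈ Set.Ioo (-1 : ℝ) 1,
    (1 - x ^ 2) * f'' x - (α + (α + 2) * x) * f' x + μ * f x = 0

open Polynomial in
lemma normalizedJacobi_isJacobiSolution (d n : ℕ) :
    IsJacobiSolution (d / 2) (n * (n + d / 2 + 1)) (fun x ↦ (normalizedJacobi d n).eval x)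
      (fun x ↦ (derivative (normalizedJacobi d n)).eval x)
      (fun x ↦ (derivative (derivative (normalizedJacobi d n))).eval x) where
  hasDerivAt x _ := Polynomial.hasDerivAt _ x
  hasDerivAt_deriv x _ := Polynomial.hasDerivAt _ x
  ode x hx := by
    obtain _ | n := n
    · simp [normalizedJacobi]
    obtain ⟨α, hα⟩ : ∃ α : ℝ, α = d / 2 := ⟨_, rfl⟩
    have hα0 : 0 ≤ α := hα ▸ by positivity
    rw [← hα]
    have hraise : C (2 * n + α + 2) * (1 - X ^ 2) * derivative (normalizedJacobi d (n + 1)) =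
        C (n + 1 : ℝ) * (C α - C (2 * n + α + 2) * X) * normalizedJacobi d (n + 1)
          + C (2 * (n + 1 : ℝ) ^ 2) * normalizedJacobi d n := by
      refine Polynomial.funext fun y ↦ ?_
      simp only [eval_mul, eval_sub, eval_add, eval_pow, eval_C, eval_X, eval_one]
      exact (normalizedJacobi_structure_relations d n hα y).2
    have hderiv := congrArg (fun p ↦ (derivative p).eval x) hraise
    simp only [derivative_mul, derivative_add, derivative_sub, derivative_C, derivative_X,
      derivative_X_pow, derivative_one, eval_add, eval_sub, eval_mul, eval_pow, eval_C, eval_X,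
      eval_zero, eval_one] at hderiv
    obtain ⟨hlower, hraise⟩ := normalizedJacobi_structure_relations d n hα x
    have h₁ : (2 * n + α + 2 : ℝ) ≠ 0 := by positivity
    have h₂ : 1 - x ^ 2 ≠ 0 := by nlinarith [hx.1, hx.2]
    push_cast at hderiv ⊢
    apply mul_left_cancel₀ h₁
    apply mul_left_cancel₀ h₁
    apply mul_left_cancel₀ h₂
    linear_combination (1 - x ^ 2) * (2 * n + α + 2) * hderiv + 2 * (n + 1) ^ 2 * hlower
      - (n + 1 + α) * (α + (2 * n + α + 2) * x) * hraise

/-- The Sonin energy `f² + (1 - x²) f'² / μ` of a solution of the Jacobi equation. -/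
def jacobiEnergy (μ : ℝ) (f f' : ℝ → ℝ) (x : ℝ) : ℝ :=
  f x ^ 2 + (1 - x ^ 2) / μ * f' x ^ 2

/-- The energy corrected by a multiple of `f f'`. The correction trades the dissipation of the
energy, which acts on `f'²` alone, for dissipation of the whole energy. -/
def correctedJacobiEnergy (α μ : ℝ) (f f' : ℝ → ℝ) (x : ℝ) : ℝ :=
  jacobiEnergy μ f f' x - (α + 1 / 2) / μ * (1 + x) * (f x * f' x)

variable {α μ δ x : ℝ} {f f' f'' : ℝ → ℝ}

lemma sq_le_jacobiEnergy (hμ : 0 < μ) (hx : x ∈ Set.Icc (-1) 1) :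
    f x ^ 2 ≤ jacobiEnergy μ f f' x := by
  have h : 0 ≤ 1 - x ^ 2 := by nlinarith [hx.1, hx.2]
  exact le_add_of_nonneg_right (by positivity)

/-- AM-GM, using `1 - x² ≥ δ (1 - x)`. -/
lemma abs_mul_le_jacobiEnergy (hα : 0 ≤ α + 1 / 2) (hμ : 0 < μ) (hδ : 0 < δ) (hx : -1 + δ ≤ x)
    (hμx : 16 * (α + 1 / 2) ^ 2 / δ ≤ μ * (1 - x)) :
    8 * ((α + 1 / 2) / μ) * |f x * f' x| ≤ jacobiEnergy μ f f' x := by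
  set σ := α + 1 / 2
  have hx1 : 0 ≤ μ * (1 - x) := le_trans (by positivity) hμx
  have hσ : 16 * σ ^ 2 ≤ μ * (1 - x ^ 2) :=
    calc 16 * σ ^ 2 ≤ μ * (1 - x) * δ := (div_le_iff₀ hδ).1 hμx
      _ ≤ μ * (1 - x) * (1 + x) := by gcongr; linarith
      _ = μ * (1 - x ^ 2) := by ring
  have hσμ : 16 * (σ / μ) ^ 2 ≤ (1 - x ^ 2) / μ := by
    rw [div_pow, ← mul_div_assoc, div_le_div_iff₀ (by positivity) hμ]
    nlinarith
  calc 8 * (σ / μ) * |f x * f' x| = 2 * |f x| * (4 * (σ / μ) * |f' x|) := by rw [abs_mul]; ring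
    _ ≤ |f x| ^ 2 + (4 * (σ / μ) * |f' x|) ^ 2 := two_mul_le_add_sq _ _
    _ = f x ^ 2 + 16 * (σ / μ) ^ 2 * f' x ^ 2 := by rw [mul_pow, sq_abs, sq_abs]; ring
    _ ≤ jacobiEnergy μ f f' x := by unfold jacobiEnergy; gcongr

lemma abs_correctedJacobiEnergy_sub_le (hα : 0 ≤ α + 1 / 2) (hμ : 0 < μ) (hδ : 0 < δ)
    (hx : -1 + δ ≤ x) (hx1 : x ≤ 1) (hμx : 16 * (α + 1 / 2) ^ 2 / δ ≤ μ * (1 - x)) :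
    |correctedJacobiEnergy α μ f f' x - jacobiEnergy μ f f' x| ≤ jacobiEnergy μ f f' x / 4 := by
  have hamgm := abs_mul_le_jacobiEnergy (f := f) (f' := f') hα hμ hδ hx hμx
  have hσ : 0 ≤ (α + 1 / 2) / μ := by positivity
  calc |correctedJacobiEnergy α μ f f' x - jacobiEnergy μ f f' x|
      = (α + 1 / 2) / μ * (1 + x) * |f x * f' x| := by
        rw [correctedJacobiEnergy, sub_sub_cancel_left, abs_neg, abs_mul,
          abs_of_nonneg (mul_nonneg hσ (by linarith))]
    _ ≤ (α + 1 / 2) / μ * 2 * |f x * f' x| := by gcongr; linarith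
    _ ≤ jacobiEnergy μ f f' x / 4 := by linarith

lemma mul_sq_le_one_add_mul_correctedJacobiEnergy (hα : 0 ≤ α + 1 / 2) (hμ : 0 < μ) (hδ : 0 < δ)
    (hx : x ∈ Set.Icc (-1 + δ) 1) (hμx : 16 * (α + 1 / 2) ^ 2 / δ ≤ μ * (1 - x)) :
    3 / 4 * δ * f x ^ 2 ≤ (1 + x) * correctedJacobiEnergy α μ f f' x := by
  have h := (abs_le.1 (abs_correctedJacobiEnergy_sub_le (f := f) (f' := f') hα hμ hδ hx.1 hx.2
    hμx)).1
  have hE := sq_le_jacobiEnergy (f := f) (f' := f') hμ ⟨by linarith [hx.1], hx.2⟩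
  calc 3 / 4 * δ * f x ^ 2 = δ * (3 / 4 * f x ^ 2) := by ring
    _ ≤ (1 + x) * correctedJacobiEnergy α μ f f' x := by gcongr <;> linarith [hx.1]

namespace IsJacobiSolution

lemma hasDerivAt_jacobiEnergy (hf : IsJacobiSolution α μ f f' f'') (hx : x ∈ Set.Icc (-1) 1) :
    HasDerivAt (jacobiEnergy μ f f')
      (2 * f x * f' x + (-2 * x / μ * f' x ^ 2 + (1 - x ^ 2) / μ * (2 * f' x * f'' x))) x := by
  have h := ((hf.hasDerivAt x hx).pow 2).add
    (((((hasDerivAt_id x).pow 2).const_sub 1).div_const μ).mul ((hf.hasDerivAt_deriv x hx).pow 2))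
  refine h.congr_deriv ?_
  simp

lemma hasDerivAt_correctedJacobiEnergy (hf : IsJacobiSolution α μ f f' f'')
    (hx : x ∈ Set.Icc (-1) 1) :
    HasDerivAt (correctedJacobiEnergy α μ f f')
      (2 * f x * f' x + (-2 * x / μ * f' x ^ 2 + (1 - x ^ 2) / μ * (2 * f' x * f'' x))
        - ((α + 1 / 2) / μ * (f x * f' x)
          + (α + 1 / 2) / μ * (1 + x) * (f' x * f' x + f x * f'' x))) x := by
  have h := (hf.hasDerivAt_jacobiEnergy hx).sub ((((hasDerivAt_id x).const_add 1).const_mul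
    ((α + 1 / 2) / μ)).mul ((hf.hasDerivAt x hx).mul (hf.hasDerivAt_deriv x hx)))
  refine h.congr_deriv ?_
  simp

lemma monotoneOn_one_add_mul_jacobiEnergy (hf : IsJacobiSolution α μ f f' f'')
    (hα : 0 ≤ α + 1 / 2) (hμ : 0 < μ) :
    MonotoneOn (fun x ↦ (1 + x) * jacobiEnergy μ f f' x) (Set.Icc (-1) 1) := by
  have hderiv (x : ℝ) (hx : x ∈ Set.Icc (-1 : ℝ) 1) :=
    ((hasDerivAt_id x).const_add 1).mul (hf.hasDerivAt_jacobiEnergy hx)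
  refine monotoneOn_of_hasDerivWithinAt_nonneg (convex_Icc _ _)
    (fun x hx ↦ (hderiv x hx).continuousAt.continuousWithinAt)
    (fun x hx ↦ (hderiv x (interior_subset hx)).hasDerivWithinAt) fun x hx ↦ ?_
  rw [interior_Icc] at hx
  have hode := hf.ode x hx
  calc (0 : ℝ) ≤ f x ^ 2 + 2 * (α + 1 / 2) * (1 + x) ^ 2 / μ * f' x ^ 2 := by positivity
    _ = _ := by
      simp only [jacobiEnergy, id]
      field_simp
      linear_combination (1 + x) * (-2 * f' x) * hode

/-- The power `α + 1/4` falls short of the optimal `α + 1/2`; the slack absorbs the error terms. -/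
lemma monotoneOn_rpow_mul_correctedJacobiEnergy (hf : IsJacobiSolution α μ f f' f'')
    (hα : 0 < α + 1 / 2) (hμ : 0 < μ) (hδ : 0 < δ) :
    MonotoneOn
      (fun x ↦ (1 - x) ^ (α + 1 / 4) * ((1 + x) * correctedJacobiEnergy α μ f f' x))
      (Set.Icc (-1 + δ) (1 - 16 * (α + 1 / 2) ^ 2 / δ / μ)) := by
  have hK : 0 < 16 * (α + 1 / 2) ^ 2 / δ / μ := by positivity
  have hderiv (x : ℝ)
      (hx : x ∈ Set.Icc (-1 + δ) (1 - 16 * (α + 1 / 2) ^ 2 / δ / μ)) :=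
    (((hasDerivAt_id x).const_sub 1).rpow_const (p := α + 1 / 4)
      (Or.inl (by simp only [id]; linarith [hx.2]))).mul
      (((hasDerivAt_id x).const_add 1).mul
        (hf.hasDerivAt_correctedJacobiEnergy ⟨by linarith [hx.1], by linarith [hx.2]⟩))
  refine monotoneOn_of_hasDerivWithinAt_nonneg (convex_Icc _ _)
    (fun x hx ↦ (hderiv x hx).continuousAt.continuousWithinAt)
    (fun x hx ↦ (hderiv x (interior_subset hx)).hasDerivWithinAt) fun x hx ↦ ?_
  replace hx := interior_subset hx
  have hx1 : 0 < 1 - x := by linarith [hx.2]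
  have hx2 : 0 < 1 + x := by linarith [hx.1]
  have hode := hf.ode x ⟨by linarith, by linarith⟩
  have hamgm := abs_mul_le_jacobiEnergy (f := f) (f' := f') hα.le hμ hδ hx.1
    ((div_le_iff₀' hμ).1 (by linarith [hx.2]))
  have hcross : (α + 1 / 2) / μ * (7 - x) * (f x * f' x) ≤ jacobiEnergy μ f f' x :=
    calc (α + 1 / 2) / μ * (7 - x) * (f x * f' x)
        ≤ (α + 1 / 2) / μ * (7 - x) * |f x * f' x| :=
          mul_le_mul_of_nonneg_left (le_abs_self _) (mul_nonneg (by positivity) (by linarith))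
      _ ≤ (α + 1 / 2) / μ * 8 * |f x * f' x| := by gcongr; linarith
      _ ≤ jacobiEnergy μ f f' x := by linarith
  have hq : (1 - x) ^ (α + 1 / 4) = (1 - x) ^ (α + 1 / 4 - 1) * (1 - x) := by
    rw [Real.rpow_sub_one hx1.ne']; field_simp
  calc (0 : ℝ)
      ≤ (1 - x) ^ (α + 1 / 4 - 1) * ((1 - x) * f x ^ 2 + (1 + x) / 4 *
          (jacobiEnergy μ f f' x - (α + 1 / 2) / μ * (7 - x) * (f x * f' x))) := by
        have := sub_nonneg.2 hcross
        positivity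
    _ = _ := by
      simp only [Pi.mul_apply, id, hq, correctedJacobiEnergy, jacobiEnergy]
      generalize (1 - x) ^ (α + 1 / 4 - 1) = q
      field_simp
      linear_combination q * (1 + x) * (-16 * (1 - x) * f' x + 8 * (α + 1 / 2) * f x) * hode

lemma one_add_mul_jacobiEnergy_le (hf : IsJacobiSolution α μ f f' f'') (hα : 0 ≤ α + 1 / 2)
    (hμ : 0 < μ) (hx : x ∈ Set.Icc (-1) 1) :
    (1 + x) * jacobiEnergy μ f f' x ≤ 2 * f 1 ^ 2 :=
  calc (1 + x) * jacobiEnergy μ f f' x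
      ≤ (1 + 1) * jacobiEnergy μ f f' 1 :=
        hf.monotoneOn_one_add_mul_jacobiEnergy hα hμ hx ⟨by norm_num, le_rfl⟩ hx.2
    _ = 2 * f 1 ^ 2 := by simp only [jacobiEnergy]; ring

lemma sq_le (hf : IsJacobiSolution α μ f f' f'') (hα : 0 ≤ α + 1 / 2) (hμ : 0 < μ) (hδ : 0 < δ)
    (hx : x ∈ Set.Icc (-1 + δ) 1) : f x ^ 2 ≤ 2 / δ * f 1 ^ 2 := by
  have hx' : x ∈ Set.Icc (-1) 1 := ⟨by linarith [hx.1], hx.2⟩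
  rw [div_mul_eq_mul_div, le_div_iff₀' hδ]
  calc δ * f x ^ 2 ≤ (1 + x) * jacobiEnergy μ f f' x := by
        gcongr
        · linarith [hx'.1]
        · linarith [hx.1]
        · exact sq_le_jacobiEnergy hμ hx'
    _ ≤ 2 * f 1 ^ 2 := hf.one_add_mul_jacobiEnergy_le hα hμ hx'

lemma one_add_mul_correctedJacobiEnergy_le (hf : IsJacobiSolution α μ f f' f'')
    (hα : 0 ≤ α + 1 / 2) (hμ : 0 < μ) (hδ : 0 < δ) (hx : x ∈ Set.Icc (-1 + δ) 1)
    (hμx : 16 * (α + 1 / 2) ^ 2 / δ ≤ μ * (1 - x)) :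
    (1 + x) * correctedJacobiEnergy α μ f f' x ≤ 5 / 2 * f 1 ^ 2 := by
  have h := (abs_le.1 (abs_correctedJacobiEnergy_sub_le (f := f) (f' := f') hα hμ hδ hx.1 hx.2
    hμx)).2
  have hx1 : x ∈ Set.Icc (-1) 1 := ⟨by linarith [hx.1], hx.2⟩
  calc (1 + x) * correctedJacobiEnergy α μ f f' x
      ≤ (1 + x) * (5 / 4 * jacobiEnergy μ f f' x) := by gcongr <;> linarith [hx1.1]
    _ ≤ 5 / 2 * f 1 ^ 2 := by linarith [hf.one_add_mul_jacobiEnergy_le hα hμ hx1]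

lemma rpow_mul_sq_le (hf : IsJacobiSolution α μ f f' f'') (hα : 0 < α + 1 / 2) (hμ : 0 < μ)
    (hδ : 0 < δ) (hx : -1 + δ ≤ x) (hμx : 16 * (α + 1 / 2) ^ 2 / δ ≤ μ * (1 - x)) :
    (μ * (1 - x)) ^ (α + 1 / 4) * f x ^ 2 ≤
      4 / δ * (16 * (α + 1 / 2) ^ 2 / δ) ^ (α + 1 / 4) * f 1 ^ 2 := by
  have hmono := hf.monotoneOn_rpow_mul_correctedJacobiEnergy hα hμ hδ
  set K := 16 * (α + 1 / 2) ^ 2 / δ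
  have hK : 0 < K := by positivity
  obtain ⟨y, hy⟩ : ∃ y, y = 1 - K / μ := ⟨_, rfl⟩
  have hμy : μ * (1 - y) = K := by rw [hy]; field_simp; ring
  have hxy : x ≤ y := hy ▸ by linarith [(div_le_iff₀' hμ).2 hμx]
  have hy1 : 0 ≤ 1 - y := nonneg_of_mul_nonneg_right (hμy ▸ hK.le) hμ
  have hx1 : 0 ≤ 1 - x := by linarith
  have hlower : 3 / 4 * δ * f x ^ 2 ≤ (1 + x) * correctedJacobiEnergy α μ f f' x :=
    mul_sq_le_one_add_mul_correctedJacobiEnergy hα.le hμ hδ ⟨hx, sub_nonneg.1 hx1⟩ hμx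
  have hupper : (1 + y) * correctedJacobiEnergy α μ f f' y ≤ 5 / 2 * f 1 ^ 2 :=
    hf.one_add_mul_correctedJacobiEnergy_le hα.le hμ hδ ⟨hx.trans hxy, sub_nonneg.1 hy1⟩ hμy.ge
  have hscaled : (μ * (1 - x)) ^ (α + 1 / 4) * (3 / 4 * δ * f x ^ 2) ≤
      K ^ (α + 1 / 4) * (5 / 2 * f 1 ^ 2) :=
    calc (μ * (1 - x)) ^ (α + 1 / 4) * (3 / 4 * δ * f x ^ 2)
        = μ ^ (α + 1 / 4) * ((1 - x) ^ (α + 1 / 4) * (3 / 4 * δ * f x ^ 2)) := by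
          rw [Real.mul_rpow hμ.le hx1, mul_assoc]
      _ ≤ μ ^ (α + 1 / 4) *
            ((1 - x) ^ (α + 1 / 4) * ((1 + x) * correctedJacobiEnergy α μ f f' x)) := by gcongr
      _ ≤ μ ^ (α + 1 / 4) *
            ((1 - y) ^ (α + 1 / 4) * ((1 + y) * correctedJacobiEnergy α μ f f' y)) :=
          mul_le_mul_of_nonneg_left (hmono ⟨hx, hy ▸ hxy⟩ ⟨hx.trans hxy, hy.le⟩ hxy) (by positivity)
      _ ≤ μ ^ (α + 1 / 4) * ((1 - y) ^ (α + 1 / 4) * (5 / 2 * f 1 ^ 2)) := by gcongr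
      _ = K ^ (α + 1 / 4) * (5 / 2 * f 1 ^ 2) := by
          rw [← mul_assoc, ← Real.mul_rpow hμ.le hy1, hμy]
  rw [div_mul_eq_mul_div, div_mul_eq_mul_div, le_div_iff₀ hδ]
  have : 0 ≤ K ^ (α + 1 / 4) * f 1 ^ 2 := by positivity
  linarith

theorem one_add_rpow_mul_sq_le (hf : IsJacobiSolution α μ f f' f'') (hα : 0 ≤ α + 1 / 4)
    (hμ : 0 < μ) (hδ : 0 < δ) (hx : x ∈ Set.Icc (-1 + δ) 1) :
    (1 + μ * (1 - x)) ^ (α + 1 / 4) * f x ^ 2 ≤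
      4 / δ * (1 + 16 * (α + 1 / 2) ^ 2 / δ) ^ (α + 1 / 4) * f 1 ^ 2 := by
  have hα' : 0 < α + 1 / 2 := by linarith
  have hx1 : 0 ≤ 1 - x := sub_nonneg.2 hx.2
  obtain hμx | hμx := le_total (μ * (1 - x)) (16 * (α + 1 / 2) ^ 2 / δ)
  · calc (1 + μ * (1 - x)) ^ (α + 1 / 4) * f x ^ 2
        ≤ (1 + 16 * (α + 1 / 2) ^ 2 / δ) ^ (α + 1 / 4) * (4 / δ * f 1 ^ 2) := by
          gcongr
          exact (hf.sq_le hα'.le hμ hδ hx).trans (by gcongr; norm_num)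
      _ = _ := by ring
  · have hdecay := hf.rpow_mul_sq_le hα' hμ hδ hx.1 hμx
    set K := 16 * (α + 1 / 2) ^ 2 / δ
    have hK : 0 < K := by positivity
    have hratio : 1 + μ * (1 - x) ≤ (1 + K) / K * (μ * (1 - x)) := by
      rw [div_mul_eq_mul_div, le_div_iff₀ hK]
      linarith
    calc (1 + μ * (1 - x)) ^ (α + 1 / 4) * f x ^ 2
        ≤ ((1 + K) / K * (μ * (1 - x))) ^ (α + 1 / 4) * f x ^ 2 := by gcongr
      _ = ((1 + K) / K) ^ (α + 1 / 4) * ((μ * (1 - x)) ^ (α + 1 / 4) * f x ^ 2) := by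
          rw [Real.mul_rpow (by positivity) (by positivity), mul_assoc]
      _ ≤ ((1 + K) / K) ^ (α + 1 / 4) * (4 / δ * K ^ (α + 1 / 4) * f 1 ^ 2) := by gcongr
      _ = 4 / δ * (1 + K) ^ (α + 1 / 4) * f 1 ^ 2 := by
          rw [Real.div_rpow (by positivity) hK.le]
          field_simp

end IsJacobiSolution

theorem exists_normalizedJacobi_sq_le (d : ℕ) (hδ : 0 < δ) :
    ∃ C : ℝ, 0 < C ∧ ∀ n : ℕ, 0 < n → ∀ x ∈ Set.Icc (-1 + δ) 1,
      (normalizedJacobi d n).eval x ^ 2 ≤ C * (1 + n ^ 2 * (1 - x)) ^ (-((d : ℝ) / 2 + 1 / 4)) := by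
  refine ⟨4 / δ * (1 + 16 * ((d : ℝ) / 2 + 1 / 2) ^ 2 / δ) ^ ((d : ℝ) / 2 + 1 / 4), by positivity,
    fun n hn x hx ↦ ?_⟩
  have hx1 : 0 ≤ 1 - x := sub_nonneg.2 hx.2
  have h := (normalizedJacobi_isJacobiSolution d n).one_add_rpow_mul_sq_le (by positivity)
    (by positivity) hδ hx
  rw [normalizedJacobi_eval_one, one_pow, mul_one] at h
  rw [Real.rpow_neg (by positivity), ← div_eq_mul_inv, le_div_iff₀' (by positivity)]
  refine le_trans ?_ h
  gcongr
  calc (n : ℝ) ^ 2 = n * n := sq _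
    _ ≤ n * (n + d / 2 + 1) := by gcongr; linarith [(by positivity : (0 : ℝ) ≤ d)]

end JacobiEquation

section LatticeFourier

open scoped Pointwise

variable {d : ℕ} {ω x y : (Fin d → ℤ) → ℝ} {F : Finset (Fin d → ℤ)} {ξ : Fin d → ℝ}

/-- The pairing `⟨ξ, v⟩` of a frequency `ξ` with a lattice point `v`. -/
def latticePairing (ξ : Fin d → ℝ) (v : Fin d → ℤ) : ℝ := ∑ i, ξ i * (v i : ℝ)

/-- The character `v ↦ e^{i⟨ξ, v⟩}` of `ℤ^d` with frequency `ξ`, the kernel of `ftOmega`. -/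
def latticeChar (ξ : Fin d → ℝ) (v : Fin d → ℤ) : ℂ :=
  Complex.exp (Complex.I * (latticePairing ξ v : ℂ))

/-- The frequency cube `[-π, π]^d`. -/
def fourierBox (d : ℕ) : Set (Fin d → ℝ) := Set.univ.pi fun _ ↦ Set.Icc (-π) π

lemma isCompact_fourierBox : IsCompact (fourierBox d) := isCompact_univ_pi fun _ ↦ isCompact_Icc

lemma latticePairing_neg_right (ξ : Fin d → ℝ) (v : Fin d → ℤ) :
    latticePairing ξ (-v) = -latticePairing ξ v := by
  simp [latticePairing]

lemma latticePairing_add_right (ξ : Fin d → ℝ) (v w : Fin d → ℤ) :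
    latticePairing ξ (v + w) = latticePairing ξ v + latticePairing ξ w := by
  simp [latticePairing, mul_add, Finset.sum_add_distrib]

@[fun_prop]
lemma continuous_latticePairing (v : Fin d → ℤ) :
    Continuous fun ξ : Fin d → ℝ ↦ latticePairing ξ v := by
  unfold latticePairing
  fun_prop

@[fun_prop]
lemma continuous_latticeChar (v : Fin d → ℤ) :
    Continuous fun ξ : Fin d → ℝ ↦ latticeChar ξ v := by
  unfold latticeChar
  fun_prop

lemma latticeChar_add (ξ : Fin d → ℝ) (v w : Fin d → ℤ) :
    latticeChar ξ (v + w) = latticeChar ξ v * latticeChar ξ w := by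
  simp only [latticeChar, latticePairing_add_right, ← Complex.exp_add, Complex.ofReal_add, mul_add]

lemma conj_latticeChar (ξ : Fin d → ℝ) (v : Fin d → ℤ) :
    starRingEnd ℂ (latticeChar ξ v) = latticeChar ξ (-v) := by
  simp [latticeChar, ← Complex.exp_conj, latticePairing_neg_right]

lemma norm_latticeChar (ξ : Fin d → ℝ) (v : Fin d → ℤ) : ‖latticeChar ξ v‖ = 1 := by
  rw [latticeChar, mul_comm, Complex.norm_exp_ofReal_mul_I]

lemma integral_exp_I_mul_int (k : ℤ) :
    ∫ s in Set.Icc (-π) π, Complex.exp (Complex.I * ((s * k : ℝ) : ℂ)) =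
      if k = 0 then (2 * π : ℂ) else 0 := by
  rw [integral_Icc_eq_integral_Ioc, ← intervalIntegral.integral_of_le (by linarith [Real.pi_pos])]
  split_ifs with hk
  · simp [hk]
    ring
  · have hc : Complex.I * (k : ℂ) ≠ 0 := by simp [hk]
    have hlin (s : ℝ) : Complex.I * ((s * k : ℝ) : ℂ) = Complex.I * k * s := by push_cast; ring
    simp only [hlin]
    rw [integral_exp_mul_complex hc, div_eq_zero_iff, sub_eq_zero,
      Complex.exp_eq_exp_iff_exists_int]
    exact Or.inl ⟨k, by push_cast; ring⟩

lemma integral_fourierBox_latticeChar (v : Fin d → ℤ) :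
    ∫ ξ in fourierBox d, latticeChar ξ v = if v = 0 then (2 * π : ℂ) ^ d else 0 := by
  have hprod (ξ : Fin d → ℝ) :
      latticeChar ξ v = ∏ i, Complex.exp (Complex.I * ((ξ i * v i : ℝ) : ℂ)) := by
    rw [latticeChar, latticePairing, Complex.ofReal_sum, Finset.mul_sum, Complex.exp_sum]
  simp only [hprod]
  rw [fourierBox, volume_pi, Measure.restrict_pi_pi, integral_fintype_prod_eq_prod
    fun i (s : ℝ) ↦ Complex.exp (Complex.I * ((s * v i : ℝ) : ℂ))]
  simp only [integral_exp_I_mul_int]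
  split_ifs with hv
  · simp [hv]
  · obtain ⟨i, hi⟩ := Function.ne_iff.1 hv
    exact Finset.prod_eq_zero (Finset.mem_univ i) (if_neg hi)

lemma ftOmega_eq_sum (hF : Function.support x ⊆ F) (ξ : Fin d → ℝ) :
    ftOmega x ξ = ∑ v ∈ F, (x v : ℂ) * latticeChar ξ v :=
  tsum_eq_sum' fun _ hv ↦ hF fun h ↦ hv (by simp [h])

lemma continuous_ftOmega (hx : (Function.support x).Finite) : Continuous (ftOmega x) := by
  rw [funext (ftOmega_eq_sum hx.coe_toFinset.ge)]
  fun_prop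

theorem integral_fourierBox_norm_ftOmega_sq (hx : (Function.support x).Finite) :
    ∫ ξ in fourierBox d, ‖ftOmega x ξ‖ ^ 2 = (2 * π) ^ d * ∑' v, x v ^ 2 := by
  obtain ⟨F, hF⟩ : ∃ F : Finset (Fin d → ℤ), Function.support x ⊆ F :=
    ⟨hx.toFinset, hx.coe_toFinset.ge⟩
  have hexpand (ξ : Fin d → ℝ) : ((‖ftOmega x ξ‖ ^ 2 : ℝ) : ℂ) =
      ∑ v ∈ F, ∑ w ∈ F, (x v : ℂ) * (x w : ℂ) * latticeChar ξ (v - w) := by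
    rw [Complex.ofReal_pow, ← Complex.mul_conj', ftOmega_eq_sum hF, map_sum, Finset.sum_mul_sum]
    refine Finset.sum_congr rfl fun v _ ↦ Finset.sum_congr rfl fun w _ ↦ ?_
    rw [map_mul, Complex.conj_ofReal, conj_latticeChar, sub_eq_add_neg, latticeChar_add]
    ring
  have hint (c : ℂ) (v : Fin d → ℤ) : IntegrableOn (fun ξ ↦ c * latticeChar ξ v) (fourierBox d) :=
    (by fun_prop : Continuous _).continuousOn.integrableOn_compact isCompact_fourierBox
  rw [tsum_eq_sum' (s := F) fun v hv ↦ hF fun h ↦ hv (by simp [h])]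
  apply Complex.ofReal_injective
  rw [← integral_complex_ofReal]
  simp only [hexpand]
  rw [integral_finsetSum _ fun v _ ↦ integrable_finsetSum _ fun w _ ↦ hint _ _]
  push_cast
  rw [Finset.mul_sum]
  refine Finset.sum_congr rfl fun v hv ↦ ?_
  rw [integral_finsetSum _ fun w _ ↦ hint _ _]
  simp only [integral_const_mul, integral_fourierBox_latticeChar, sub_eq_zero, mul_ite, mul_zero,
    Finset.sum_ite_eq, if_pos hv]
  ring

lemma summable_ftOmega (hx : Summable x) (ξ : Fin d → ℝ) :
    Summable fun v ↦ (x v : ℂ) * latticeChar ξ v :=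
  .of_norm_bounded hx.abs fun v ↦ by simp [norm_latticeChar]

lemma ftOmega_smul (a : ℝ) (x : (Fin d → ℤ) → ℝ) (ξ : Fin d → ℝ) :
    ftOmega (a • x) ξ = a * ftOmega x ξ := by
  simp only [ftOmega, Pi.smul_apply, smul_eq_mul, Complex.ofReal_mul, mul_assoc, tsum_mul_left]

lemma ftOmega_add (hx : Summable x) (hy : Summable y) (ξ : Fin d → ℝ) :
    ftOmega (x + y) ξ = ftOmega x ξ + ftOmega y ξ := by
  refine Eq.trans (tsum_congr fun v ↦ ?_)
    ((summable_ftOmega hx ξ).tsum_add (summable_ftOmega hy ξ))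
  rw [Pi.add_apply, Complex.ofReal_add, add_mul]
  rfl

lemma ftOmega_sub (hx : Summable x) (hy : Summable y) (ξ : Fin d → ℝ) :
    ftOmega (x - y) ξ = ftOmega x ξ - ftOmega y ξ := by
  refine Eq.trans (tsum_congr fun v ↦ ?_)
    ((summable_ftOmega hx ξ).tsum_sub (summable_ftOmega hy ξ))
  rw [Pi.sub_apply, Complex.ofReal_sub, sub_mul]
  rfl

lemma ftOmega_single_zero (ξ : Fin d → ℝ) : ftOmega (Pi.single 0 1) ξ = 1 := by
  rw [ftOmega, tsum_eq_single 0 fun v hv ↦ by simp [hv]]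
  simp

lemma ftOmega_zero_right (x : (Fin d → ℤ) → ℝ) : ftOmega x 0 = ((∑' v, x v : ℝ) : ℂ) := by
  simp [ftOmega, Complex.ofReal_tsum]

lemma latticeConv_eq_sum (hF : Function.support ω ⊆ F) (x : (Fin d → ℤ) → ℝ) (v : Fin d → ℤ) :
    latticeConv ω x v = ∑ w ∈ F, ω w * x (v - w) := by
  rw [latticeConv, ← (Equiv.subLeft v).tsum_eq]
  simp only [Equiv.subLeft_apply, sub_sub_cancel]
  exact tsum_eq_sum' fun w hw ↦ hF (left_ne_zero_of_mul hw)

lemma ftOmega_latticeConv (hω : (Function.support ω).Finite) (hx : Summable x) (ξ : Fin d → ℝ) :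
    ftOmega (latticeConv ω x) ξ = ftOmega ω ξ * ftOmega x ξ := by
  have hF : Function.support ω ⊆ hω.toFinset := hω.coe_toFinset.ge
  have hterm (v : Fin d → ℤ) : (latticeConv ω x v : ℂ) * latticeChar ξ v =
      ∑ w ∈ hω.toFinset,
        ω w * latticeChar ξ w * ((x (v - w) : ℂ) * latticeChar ξ (v - w)) := by
    rw [latticeConv_eq_sum hF, Complex.ofReal_sum, Finset.sum_mul]
    refine Finset.sum_congr rfl fun w _ ↦ ?_
    rw [← sub_add_cancel v w, latticeChar_add, sub_add_cancel]
    push_cast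
    ring
  refine (tsum_congr hterm).trans (HasSum.tsum_eq ?_)
  rw [ftOmega_eq_sum hF, Finset.sum_mul]
  refine hasSum_sum fun w _ ↦ HasSum.mul_left _ ?_
  exact (Equiv.subRight w).hasSum_iff.2 (summable_ftOmega hx ξ).hasSum

lemma support_latticeConv_subset (ω x : (Fin d → ℤ) → ℝ) :
    Function.support (latticeConv ω x) ⊆ Function.support ω + Function.support x := by
  intro v hv
  obtain ⟨w, hw⟩ : ∃ w, ω (v - w) * x w ≠ 0 := by
    by_contra! h
    exact hv (by simp [latticeConv, h])
  exact ⟨v - w, left_ne_zero_of_mul hw, w, right_ne_zero_of_mul hw, sub_add_cancel v w⟩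

lemma ftOmega_eq_re (hsymm : ∀ v, ω (-v) = ω v) (ξ : Fin d → ℝ) :
    ftOmega ω ξ = ((ftOmega ω ξ).re : ℂ) := by
  refine (Complex.conj_eq_iff_re.1 ?_).symm
  calc starRingEnd ℂ (ftOmega ω ξ)
      = ∑' v, (ω v : ℂ) * latticeChar ξ (-v) := by
        rw [ftOmega, Complex.conj_tsum]
        exact tsum_congr fun v ↦ by rw [map_mul, Complex.conj_ofReal, ← conj_latticeChar]; rfl
    _ = ∑' v, (ω (-v) : ℂ) * latticeChar ξ v := by
        rw [← (Equiv.neg (Fin d → ℤ)).tsum_eq]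
        simp
    _ = ftOmega ω ξ := by simp only [hsymm]; rfl

end LatticeFourier

section SymbolBounds

lemma exists_mul_norm_sq_le_of_isCompact {E : Type*} [NormedAddCommGroup E] {K : Set E} {f : E → ℝ}
    {c : ℝ} (hK : IsCompact K) (hf : ContinuousOn f K) (hpos : ∀ ξ ∈ K, ξ ≠ 0 → 0 < f ξ)
    (hc : 0 < c) (hloc : ∀ᶠ ξ in 𝓝 0, c * ‖ξ‖ ^ 2 ≤ f ξ) :
    ∃ c' > 0, ∀ ξ ∈ K, c' * ‖ξ‖ ^ 2 ≤ f ξ := by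
  obtain ⟨ε, hε, hball⟩ := Metric.eventually_nhds_iff_ball.1 hloc
  have hne {ξ : E} (hξ : ξ ∉ Metric.ball 0 ε) : ξ ≠ 0 := fun h ↦ hξ (h ▸ Metric.mem_ball_self hε)
  obtain ⟨m, hm, hfar⟩ := (hK.diff Metric.isOpen_ball).exists_forall_le' (a := 0)
    (f := fun ξ ↦ f ξ / ‖ξ‖ ^ 2)
    ((hf.mono Set.sdiff_subset).div (by fun_prop) fun ξ hξ ↦
      pow_ne_zero _ (norm_ne_zero_iff.2 (hne hξ.2)))
    fun ξ hξ ↦ div_pos (hpos ξ hξ.1 (hne hξ.2)) (pow_pos (norm_pos_iff.2 (hne hξ.2)) _)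
  refine ⟨min c m, lt_min hc hm, fun ξ hξ ↦ ?_⟩
  by_cases hnear : ξ ∈ Metric.ball 0 ε
  · exact (mul_le_mul_of_nonneg_right (min_le_left _ _) (sq_nonneg _)).trans (hball ξ hnear)
  · calc min c m * ‖ξ‖ ^ 2 ≤ m * ‖ξ‖ ^ 2 := by gcongr; exact min_le_right _ _
      _ ≤ f ξ := (le_div_iff₀ (pow_pos (norm_pos_iff.2 (hne hnear)) _)).1 (hfar ξ ⟨hξ, hnear⟩)

lemma exists_mul_norm_sq_le_dotProduct_mulVec {n : Type*} [Fintype n] {M : Matrix n n ℝ}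
    (hM : M.PosDef) : ∃ c > 0, ∀ ξ : n → ℝ, c * ‖ξ‖ ^ 2 ≤ ξ ⬝ᵥ M *ᵥ ξ := by
  obtain ⟨c, hc, hsphere⟩ := (isCompact_sphere (0 : n → ℝ) 1).exists_forall_le' (a := 0)
    (f := fun ξ ↦ ξ ⬝ᵥ M *ᵥ ξ) (by fun_prop) fun ξ hξ ↦ by
      simpa using hM.dotProduct_mulVec_pos (Metric.ne_of_mem_sphere hξ one_ne_zero)
  refine ⟨c, hc, fun ξ ↦ ?_⟩
  obtain rfl | hξ := eq_or_ne ξ 0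
  · simp
  have hξ' : ‖ξ‖ ≠ 0 := norm_ne_zero_iff.2 hξ
  have h := hsphere (‖ξ‖⁻¹ • ξ) (by simp [norm_smul, hξ'])
  simp only [smul_dotProduct, mulVec_smul, dotProduct_smul, smul_eq_mul] at h
  calc c * ‖ξ‖ ^ 2 ≤ ‖ξ‖⁻¹ * (‖ξ‖⁻¹ * (ξ ⬝ᵥ M *ᵥ ξ)) * ‖ξ‖ ^ 2 := by gcongr
    _ = ξ ⬝ᵥ M *ᵥ ξ := by field_simp

lemma one_sub_cos_sub_sq_isLittleO :
    (fun t : ℝ ↦ 1 - Real.cos t - t ^ 2 / 2) =o[𝓝 0] fun t ↦ t ^ 2 := by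
  refine Asymptotics.IsBigO.trans_isLittleO (g := fun t ↦ t ^ 4) ?_
    (Asymptotics.isLittleO_pow_pow (by norm_num))
  refine Asymptotics.IsBigO.of_bound (5 / 96) ?_
  filter_upwards [Metric.closedBall_mem_nhds (0 : ℝ) one_pos] with t ht
  rw [mem_closedBall_zero_iff, Real.norm_eq_abs] at ht
  rw [norm_pow, Real.norm_eq_abs, Real.norm_eq_abs, mul_comm, ← abs_neg]
  convert Real.cos_bound ht using 2
  ring

variable {d : ℕ} {ω : (Fin d → ℤ) → ℝ} {F : Finset (Fin d → ℤ)}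

lemma dotProduct_covQ_mulVec (hF : Function.support ω ⊆ F) (ξ : Fin d → ℝ) :
    ξ ⬝ᵥ covQ d ω *ᵥ ξ = ∑ v ∈ F, ω v * latticePairing ξ v ^ 2 := by
  have hcov (i j : Fin d) : covQ d ω i j = ∑ v ∈ F, ω v * v i * v j :=
    tsum_eq_sum' fun v hv ↦ hF (left_ne_zero_of_mul (left_ne_zero_of_mul hv))
  calc ξ ⬝ᵥ covQ d ω *ᵥ ξ
      = ∑ i, ∑ j, ∑ v ∈ F, ω v * (ξ i * v i * (ξ j * v j)) := by
        simp only [dotProduct, mulVec, hcov, Finset.mul_sum, Finset.sum_mul]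
        refine Finset.sum_congr rfl fun i _ ↦ Finset.sum_congr rfl fun j _ ↦
          Finset.sum_congr rfl fun v _ ↦ ?_
        ring
    _ = ∑ v ∈ F, ∑ i, ∑ j, ω v * (ξ i * v i * (ξ j * v j)) := by
        simp only [Finset.sum_comm (t := F)]
    _ = ∑ v ∈ F, ω v * latticePairing ξ v ^ 2 := by
        simp only [latticePairing, sq, Finset.sum_mul_sum]
        simp only [Finset.mul_sum]

lemma re_ftOmega_eq_sum (hF : Function.support ω ⊆ F) (ξ : Fin d → ℝ) :
    (ftOmega ω ξ).re = ∑ v ∈ F, ω v * Real.cos (latticePairing ξ v) := by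
  simp only [ftOmega_eq_sum hF, Complex.re_sum, Complex.re_ofReal_mul, latticeChar,
    mul_comm Complex.I, Complex.exp_ofReal_mul_I_re]

lemma one_sub_re_ftOmega_sub_isLittleO (hfin : (Function.support ω).Finite)
    (hmass : ∑' v, ω v = 1) :
    (fun ξ ↦ 1 - (ftOmega ω ξ).re - (ξ ⬝ᵥ covQ d ω *ᵥ ξ) / 2) =o[𝓝 0] fun ξ ↦ ‖ξ‖ ^ 2 := by
  have hF : Function.support ω ⊆ hfin.toFinset := hfin.coe_toFinset.ge
  have hsum (ξ : Fin d → ℝ) : 1 - (ftOmega ω ξ).re - (ξ ⬝ᵥ covQ d ω *ᵥ ξ) / 2 =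
      ∑ v ∈ hfin.toFinset,
        ω v * (1 - Real.cos (latticePairing ξ v) - latticePairing ξ v ^ 2 / 2) := by
    simp only [mul_sub, mul_one, Finset.sum_sub_distrib, ← mul_div_assoc, ← Finset.sum_div]
    rw [re_ftOmega_eq_sum hF, dotProduct_covQ_mulVec hF, ← hmass, tsum_eq_sum' hF]
  simp only [hsum]
  refine Asymptotics.IsLittleO.fun_sum fun v _ ↦ ?_
  refine Asymptotics.IsLittleO.const_mul_left ?_ (ω v)
  have hpair : Tendsto (fun ξ : Fin d → ℝ ↦ latticePairing ξ v) (𝓝 0) (𝓝 0) := by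
    simpa [latticePairing] using (continuous_latticePairing v).tendsto 0
  refine (one_sub_cos_sub_sq_isLittleO.comp_tendsto hpair).trans_isBigO ?_
  refine Asymptotics.IsBigO.pow (f := fun ξ ↦ latticePairing ξ v) (g := fun ξ ↦ ‖ξ‖) ?_ 2
  unfold latticePairing
  refine Asymptotics.IsBigO.fun_sum fun i _ ↦ ?_
  refine Asymptotics.IsBigO.of_bound |(v i : ℝ)| (Eventually.of_forall fun ξ ↦ ?_)
  rw [norm_mul, norm_norm, mul_comm, Real.norm_eq_abs (v i : ℝ)]
  gcongr
  exact norm_le_pi_norm ξ i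

lemma exists_eventually_mul_norm_sq_le_one_sub_re_ftOmega (hfin : (Function.support ω).Finite)
    (hmass : ∑' v, ω v = 1) (hQ : (covQ d ω).PosDef) :
    ∃ c > 0, ∀ᶠ ξ in 𝓝 0, c * ‖ξ‖ ^ 2 ≤ 1 - (ftOmega ω ξ).re := by
  obtain ⟨q, hq, hquad⟩ := exists_mul_norm_sq_le_dotProduct_mulVec hQ
  refine ⟨q / 4, by positivity, ?_⟩
  filter_upwards [(one_sub_re_ftOmega_sub_isLittleO hfin hmass).bound (by positivity : 0 < q / 4)]
    with ξ hξ
  rw [norm_pow, norm_norm, Real.norm_eq_abs] at hξ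
  linarith [hquad ξ, (abs_le.1 hξ).1]

theorem exists_mul_norm_sq_le_one_sub_re_ftOmega (hfin : (Function.support ω).Finite)
    (hmass : ∑' v, ω v = 1) (hQ : (covQ d ω).PosDef)
    (haper : ∀ ξ ∈ fourierBox d, ξ ≠ 0 → ‖ftOmega ω ξ‖ < 1) :
    ∃ c > 0, ∀ ξ ∈ fourierBox d, c * ‖ξ‖ ^ 2 ≤ 1 - (ftOmega ω ξ).re := by
  obtain ⟨c, hc, hloc⟩ := exists_eventually_mul_norm_sq_le_one_sub_re_ftOmega hfin hmass hQ
  refine exists_mul_norm_sq_le_of_isCompact isCompact_fourierBox ?_ (fun ξ hξ hξ0 ↦ ?_) hc hloc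
  · exact (continuous_const.sub (Complex.continuous_re.comp (continuous_ftOmega hfin))).continuousOn
  · exact sub_pos.2 ((Complex.re_le_norm _).trans_lt (haper ξ hξ hξ0))

theorem exists_neg_one_add_le_re_ftOmega (hfin : (Function.support ω).Finite)
    (hmass : ∑' v, ω v = 1) (haper : ∀ ξ ∈ fourierBox d, ξ ≠ 0 → ‖ftOmega ω ξ‖ < 1) :
    ∃ δ > 0, ∀ ξ ∈ fourierBox d, -1 + δ ≤ (ftOmega ω ξ).re := by
  obtain ⟨δ, hδ, hgap⟩ := isCompact_fourierBox.exists_forall_le' (a := 0)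
    (f := fun ξ : Fin d → ℝ ↦ 1 + (ftOmega ω ξ).re)
    (continuous_const.add (Complex.continuous_re.comp (continuous_ftOmega hfin))).continuousOn
    fun ξ hξ ↦ by
      obtain rfl | hξ0 := eq_or_ne ξ 0
      · rw [ftOmega_zero_right, hmass]
        norm_num
      · linarith [(abs_le.1 (Complex.abs_re_le_norm (ftOmega ω ξ))).1,
          haper ξ hξ hξ0]
  exact ⟨δ, hδ, fun ξ hξ ↦ by linarith [hgap ξ hξ]⟩

end SymbolBounds

section JacobiIteration

open scoped Pointwise

/-- The Jacobi polynomial iteration `xₙ` driven by the kernel `ω` and started at the unit mass at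
the origin. The recurrence is indexed from `n + 2`, so that no truncated subtraction occurs. -/
structure IsJacobiIteration {d : ℕ} (ω : (Fin d → ℤ) → ℝ) (x : ℕ → (Fin d → ℤ) → ℝ) : Prop where
  zero : x 0 = Pi.single 0 1
  one : x 1 = aCoef0 d • latticeConv ω (x 0) + bCoef0 d • x 0
  add_two (n : ℕ) : x (n + 2) = aCoef d (n + 1) • latticeConv ω (x (n + 1))
    + bCoef d (n + 1) • x (n + 1) - cCoef d (n + 1) • x n

variable {d : ℕ} {ω : (Fin d → ℤ) → ℝ} {x : ℕ → (Fin d → ℤ) → ℝ} {ρ : Fin d → ℤ}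

lemma exists_subset_Icc_neg {S : Set (Fin d → ℤ)} (hS : S.Finite) :
    ∃ ρ, 0 ≤ ρ ∧ S ⊆ Set.Icc (-ρ) ρ := by
  obtain ⟨b, hb⟩ := hS.bddAbove
  obtain ⟨a, ha⟩ := hS.bddBelow
  refine ⟨b ⊔ -a ⊔ 0, le_sup_right, fun v hv ↦ ⟨neg_le.1 ?_, ?_⟩⟩
  · exact (neg_le_neg (ha hv)).trans (le_sup_right.trans le_sup_left)
  · exact (hb hv).trans (le_sup_left.trans le_sup_left)

lemma card_Icc_neg_nsmul_le (hρ : 0 ≤ ρ) {n : ℕ} (hn : 0 < n) :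
    ((Finset.Icc (-(n • ρ)) (n • ρ)).card : ℝ) ≤ n ^ d * ∏ i, (2 * (ρ i : ℝ) + 1) := by
  have hn1 : (1 : ℝ) ≤ n := by exact_mod_cast hn
  rw [Pi.card_Icc, Nat.cast_prod]
  calc ∏ i, ((Finset.Icc ((-(n • ρ)) i) ((n • ρ) i)).card : ℝ)
      ≤ ∏ i, (n * (2 * (ρ i : ℝ) + 1)) := by
        refine Finset.prod_le_prod (fun i _ ↦ by positivity) fun i _ ↦ ?_
        have hρi : 0 ≤ (n : ℤ) * ρ i := mul_nonneg n.cast_nonneg (hρ i)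
        have hcard : ((Finset.Icc ((-(n • ρ)) i) ((n • ρ) i)).card : ℤ) = 2 * (n * ρ i) + 1 := by
          rw [Int.card_Icc, Pi.neg_apply, Pi.smul_apply, nsmul_eq_mul,
            Int.toNat_of_nonneg (by linarith)]
          ring
        have hcard' : ((Finset.Icc ((-(n • ρ)) i) ((n • ρ) i)).card : ℝ) = 2 * (n * ρ i) + 1 := by
          exact_mod_cast hcard
        linarith
    _ = n ^ d * ∏ i, (2 * (ρ i : ℝ) + 1) := by
        rw [Finset.prod_mul_distrib, Finset.prod_const, Finset.card_univ, Fintype.card_fin]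

lemma sq_tsum_abs_le {ι : Type*} {f : ι → ℝ} {F : Finset ι} (hF : Function.support f ⊆ F) :
    (∑' v, |f v|) ^ 2 ≤ F.card * ∑' v, f v ^ 2 := by
  rw [tsum_eq_sum' fun v hv ↦ hF fun h ↦ hv (by simp [h]),
    tsum_eq_sum' (f := fun v ↦ f v ^ 2) fun v hv ↦ hF fun h ↦ hv (by simp [h])]
  simpa only [sq_abs] using sq_sum_le_card_mul_sum_sq (s := F) (f := fun v ↦ |f v|)

namespace IsJacobiIteration

lemma support_subset_Icc (hx : IsJacobiIteration ω x) (hρ : 0 ≤ ρ)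
    (hω : Function.support ω ⊆ Set.Icc (-ρ) ρ) (n : ℕ) :
    Function.support (x n) ⊆ Set.Icc (-(n • ρ)) (n • ρ) := by
  have hmono {m k : ℕ} (hmk : m ≤ k) :
      Set.Icc (-(m • ρ)) (m • ρ) ⊆ Set.Icc (-(k • ρ)) (k • ρ) :=
    Set.Icc_subset_Icc (neg_le_neg (nsmul_le_nsmul_left hρ hmk)) (nsmul_le_nsmul_left hρ hmk)
  have hconv {n : ℕ} (hn : Function.support (x n) ⊆ Set.Icc (-(n • ρ)) (n • ρ)) :
      Function.support (latticeConv ω (x n)) ⊆ Set.Icc (-((n + 1) • ρ)) ((n + 1) • ρ) := by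
    refine (support_latticeConv_subset _ _).trans ((Set.add_subset_add hω hn).trans ?_)
    refine (Set.Icc_add_Icc_subset _ _ _ _).trans_eq ?_
    rw [succ_nsmul', neg_add]
  have hzero : Function.support (x 0) ⊆ Set.Icc (-(0 • ρ)) (0 • ρ) := by
    rw [hx.zero, zero_smul, neg_zero, Set.Icc_self]
    exact Pi.support_single_subset
  have hsmul {a : ℝ} {y : (Fin d → ℤ) → ℝ} {S : Set (Fin d → ℤ)} (hy : Function.support y ⊆ S) :
      Function.support (a • y) ⊆ S :=
    (Function.support_const_smul_subset a y).trans hy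
  induction n using Nat.twoStepInduction with
  | zero => exact hzero
  | one =>
    rw [hx.one]
    exact (Function.support_add _ _).trans
      (Set.union_subset (hsmul (hconv hzero)) (hsmul (hzero.trans (hmono zero_le_one))))
  | more n ih₀ ih₁ =>
    rw [hx.add_two]
    exact (Function.support_sub _ _).trans (Set.union_subset ((Function.support_add _ _).trans
      (Set.union_subset (hsmul (hconv ih₁)) (hsmul (ih₁.trans (hmono (by lia))))))
      (hsmul (ih₀.trans (hmono (by lia)))))

lemma finite_support (hx : IsJacobiIteration ω x) (hω : (Function.support ω).Finite) (n : ℕ) :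
    (Function.support (x n)).Finite := by
  obtain ⟨ρ, hρ, hωρ⟩ := exists_subset_Icc_neg hω
  exact (Set.finite_Icc _ _).subset (hx.support_subset_Icc hρ hωρ n)

theorem ftOmega_eq_aeval (hx : IsJacobiIteration ω x) (hω : (Function.support ω).Finite) (n : ℕ)
    (ξ : Fin d → ℝ) :
    ftOmega (x n) ξ = Polynomial.aeval (ftOmega ω ξ) (normalizedJacobi d n) := by
  have hsum (n : ℕ) : Summable (x n) := summable_of_hasFiniteSupport (hx.finite_support hω n)
  have hconv (n : ℕ) : Summable (latticeConv ω (x n)) :=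
    summable_of_hasFiniteSupport
      ((hω.add (hx.finite_support hω n)).subset (support_latticeConv_subset _ _))
  have hsmul (a : ℝ) {y : (Fin d → ℤ) → ℝ} (hy : Summable y) : Summable (a • y) := hy.const_smul a
  induction n using Nat.twoStepInduction with
  | zero => rw [hx.zero, ftOmega_single_zero, normalizedJacobi, map_one]
  | one =>
    rw [hx.one, ftOmega_add (hsmul _ (hconv 0)) (hsmul _ (hsum 0)), ftOmega_smul, ftOmega_smul,
      ftOmega_latticeConv hω (hsum 0), hx.zero, ftOmega_single_zero, normalizedJacobi]
    simp
  | more n ih₀ ih₁ =>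
    have hconv' := hsmul (aCoef d (n + 1)) (hconv (n + 1))
    have hsum' := hsmul (bCoef d (n + 1)) (hsum (n + 1))
    have hadd : Summable (aCoef d (n + 1) • latticeConv ω (x (n + 1))
        + bCoef d (n + 1) • x (n + 1)) := hconv'.add hsum'
    rw [hx.add_two, ftOmega_sub hadd (hsmul _ (hsum n)), ftOmega_add hconv' hsum',
      ftOmega_smul, ftOmega_smul, ftOmega_smul, ftOmega_latticeConv hω (hsum _), ih₀, ih₁,
      normalizedJacobi]
    simp only [map_sub, map_add, map_mul, Polynomial.aeval_C, Polynomial.aeval_X,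
      Complex.coe_algebraMap]
    ring

theorem exists_norm_ftOmega_sq_le (hx : IsJacobiIteration ω x) (hω : (Function.support ω).Finite)
    (hmass : ∑' v, ω v = 1) (hsymm : ∀ v, ω (-v) = ω v) (hQ : (covQ d ω).PosDef)
    (haper : ∀ ξ ∈ fourierBox d, ξ ≠ 0 → ‖ftOmega ω ξ‖ < 1) :
    ∃ C > 0, ∃ c > 0, ∀ n : ℕ, 0 < n → ∀ ξ ∈ fourierBox d,
      ‖ftOmega (x n) ξ‖ ^ 2 ≤ C * (1 + ‖(n * c : ℝ) • ξ‖ ^ 2) ^ (-((d : ℝ) + 1 / 2) / 2) := by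
  obtain ⟨q, hq, hquad⟩ := exists_mul_norm_sq_le_one_sub_re_ftOmega hω hmass hQ haper
  obtain ⟨δ, hδ, hgap⟩ := exists_neg_one_add_le_re_ftOmega hω hmass haper
  obtain ⟨C, hC, hdecay⟩ := exists_normalizedJacobi_sq_le d hδ
  refine ⟨C, hC, √q, Real.sqrt_pos.2 hq, fun n hn ξ hξ ↦ ?_⟩
  have hnorm : ‖(n * √q : ℝ) • ξ‖ ^ 2 = n ^ 2 * (q * ‖ξ‖ ^ 2) := by
    rw [norm_smul, Real.norm_of_nonneg (by positivity), mul_pow, mul_pow, Real.sq_sqrt hq.le,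
      mul_assoc]
  have hre : (ftOmega ω ξ).re ≤ 1 := by
    linarith [hquad ξ hξ, (by positivity : 0 ≤ q * ‖ξ‖ ^ 2)]
  have hreal : ftOmega (x n) ξ = (((normalizedJacobi d n).eval (ftOmega ω ξ).re : ℝ) : ℂ) := by
    rw [hx.ftOmega_eq_aeval hω]
    conv_lhs => rw [ftOmega_eq_re hsymm]
    exact Polynomial.aeval_ofReal _ _
  rw [hnorm, show -((d : ℝ) + 1 / 2) / 2 = -((d : ℝ) / 2 + 1 / 4) by ring]
  calc ‖ftOmega (x n) ξ‖ ^ 2 = (normalizedJacobi d n).eval (ftOmega ω ξ).re ^ 2 := by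
        rw [hreal, Complex.norm_real, Real.norm_eq_abs, sq_abs]
    _ ≤ C * (1 + n ^ 2 * (1 - (ftOmega ω ξ).re)) ^ (-((d : ℝ) / 2 + 1 / 4)) :=
        hdecay n hn _ ⟨hgap ξ hξ, hre⟩
    _ ≤ C * (1 + n ^ 2 * (q * ‖ξ‖ ^ 2)) ^ (-((d : ℝ) / 2 + 1 / 4)) := by
        refine mul_le_mul_of_nonneg_left (Real.rpow_le_rpow_of_nonpos (by positivity) ?_ ?_) hC.le
        · gcongr
          exact hquad ξ hξ
        · rw [neg_nonpos]
          positivity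

theorem exists_pow_mul_tsum_sq_le (hx : IsJacobiIteration ω x) (hω : (Function.support ω).Finite)
    (hmass : ∑' v, ω v = 1) (hsymm : ∀ v, ω (-v) = ω v) (hQ : (covQ d ω).PosDef)
    (haper : ∀ ξ ∈ fourierBox d, ξ ≠ 0 → ‖ftOmega ω ξ‖ < 1) :
    ∃ A : ℝ, ∀ n : ℕ, 0 < n → n ^ d * ∑' v, x n v ^ 2 ≤ A := by
  obtain ⟨C, hC, c, hc, hbound⟩ := hx.exists_norm_ftOmega_sq_le hω hmass hsymm hQ haper
  set profile : (Fin d → ℝ) → ℝ := fun ξ ↦ (1 + ‖ξ‖ ^ 2) ^ (-((d : ℝ) + 1 / 2) / 2)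
  have hprofile : Integrable profile := integrable_rpow_neg_one_add_norm_sq (by simp)
  refine ⟨C * ((c ^ d)⁻¹ * ∫ ξ, profile ξ) / (2 * π) ^ d, fun n hn ↦ ?_⟩
  have hnc : 0 < n * c := by positivity
  have hscaled : Integrable fun ξ ↦ C * profile ((n * c) • ξ) :=
    (hprofile.comp_smul hnc.ne').const_mul C
  have hparseval : (2 * π) ^ d * ∑' v, x n v ^ 2 ≤ C * (((n * c) ^ d)⁻¹ * ∫ ξ, profile ξ) :=
    calc (2 * π) ^ d * ∑' v, x n v ^ 2 = ∫ ξ in fourierBox d, ‖ftOmega (x n) ξ‖ ^ 2 :=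
          (integral_fourierBox_norm_ftOmega_sq (hx.finite_support hω n)).symm
      _ ≤ ∫ ξ in fourierBox d, C * profile ((n * c) • ξ) :=
          setIntegral_mono_on
            (((continuous_ftOmega (hx.finite_support hω n)).norm.pow 2).continuousOn
              |>.integrableOn_compact isCompact_fourierBox)
            hscaled.integrableOn isCompact_fourierBox.measurableSet (hbound n hn)
      _ ≤ ∫ ξ, C * profile ((n * c) • ξ) :=
          setIntegral_le_integral hscaled (Eventually.of_forall fun ξ ↦ by positivity)
      _ = C * (((n * c) ^ d)⁻¹ * ∫ ξ, profile ξ) := by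
          rw [integral_const_mul, Measure.integral_comp_smul, Module.finrank_fin_fun,
            abs_of_pos (by positivity), smul_eq_mul]
  rw [le_div_iff₀ (by positivity)]
  calc (n ^ d * ∑' v, x n v ^ 2) * (2 * π) ^ d = n ^ d * ((2 * π) ^ d * ∑' v, x n v ^ 2) := by ring
    _ ≤ n ^ d * (C * (((n * c) ^ d)⁻¹ * ∫ ξ, profile ξ)) := by gcongr
    _ = C * ((c ^ d)⁻¹ * ∫ ξ, profile ξ) := by rw [mul_pow]; field_simp

end IsJacobiIteration

end JacobiIteration

theorem jacobi_iteration_l1_bound_general {d : ℕ} {ω : (Fin d → ℤ) → ℝ}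
    {x : ℕ → (Fin d → ℤ) → ℝ} (hx : IsJacobiIteration ω x) (hfin : (Function.support ω).Finite)
    (hmass : ∑' v, ω v = 1) (hsymm : ∀ v, ω (-v) = ω v) (hQ : (covQ d ω).PosDef)
    (haper : ∀ ξ ∈ fourierBox d, ξ ≠ 0 → ‖ftOmega ω ξ‖ < 1) :
    ∃ C : ℝ, 0 < C ∧ ∀ n : ℕ, ∑' v, |x n v| ≤ C := by
  obtain ⟨A, hA⟩ := hx.exists_pow_mul_tsum_sq_le hfin hmass hsymm hQ haper
  obtain ⟨ρ, hρ, hωρ⟩ := exists_subset_Icc_neg hfin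
  set P : ℝ := ∏ i, (2 * (ρ i : ℝ) + 1)
  have hP : 0 ≤ P := Finset.prod_nonneg fun i _ ↦ by
    linarith [(Int.cast_nonneg (hρ i) : (0 : ℝ) ≤ ρ i)]
  refine ⟨1 + √(P * A), by positivity, fun n ↦ ?_⟩
  obtain rfl | hn := n.eq_zero_or_pos
  · have h0 : ∑' v, |x 0 v| = 1 := by
      rw [hx.zero, tsum_eq_single 0 fun v hv ↦ by simp [hv]]
      simp
    linarith [Real.sqrt_nonneg (P * A)]
  · have hsupp : Function.support (x n) ⊆ Finset.Icc (-(n • ρ)) (n • ρ) := by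
      simpa using hx.support_subset_Icc hρ hωρ n
    have hsq : (∑' v, |x n v|) ^ 2 ≤ P * A :=
      calc (∑' v, |x n v|) ^ 2
          ≤ (Finset.Icc (-(n • ρ)) (n • ρ)).card * ∑' v, x n v ^ 2 := sq_tsum_abs_le hsupp
        _ ≤ n ^ d * P * ∑' v, x n v ^ 2 := by
            gcongr
            exact card_Icc_neg_nsmul_le hρ hn
        _ = P * (n ^ d * ∑' v, x n v ^ 2) := by ring
        _ ≤ P * A := by gcongr; exact hA n hn
    linarith [Real.le_sqrt_of_sq_le hsq]

/-- The ℓ¹ norms (total variations) of the Jacobi polynomial iteration are uniformly bounded. -/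
theorem jacobi_iteration_l1_bound
    (d : ℕ) (hd : 1 ≤ d) (ω : (Fin d → ℤ) → ℝ)
    (hfin : (Function.support ω).Finite) (hnn : ∀ v, 0 ≤ ω v)
    (hmass : ∑' v : Fin d → ℤ, ω v = 1) (hsymm : ∀ v, ω (-v) = ω v)
    (hQ : (covQ d ω).PosDef)
    (haper : ∀ ξ : Fin d → ℝ, (∀ i, ξ i ∈ Set.Icc (-π) π) → ξ ≠ 0 →
      ‖ftOmega ω ξ‖ < 1)
    (x : ℕ → (Fin d → ℤ) → ℝ)
    (hx0 : ∀ v, x 0 v = if v = 0 then 1 else 0)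
    (hx1 : ∀ v, x 1 v = aCoef0 d * latticeConv ω (x 0) v + bCoef0 d * x 0 v)
    (hrec : ∀ n, 1 ≤ n → ∀ v,
      x (n + 1) v = aCoef d n * latticeConv ω (x n) v + bCoef d n * x n v - cCoef d n * x (n - 1) v) :
    ∃ C : ℝ, 0 < C ∧ ∀ n : ℕ, ∑' v : Fin d → ℤ, |x n v| ≤ C :=
  jacobi_iteration_l1_bound_general
    ⟨funext fun v ↦ by rw [hx0, Pi.single_apply], funext hx1,
      fun n ↦ funext (hrec (n + 1) n.succ_pos)⟩
    hfin hmass hsymm hQ fun ξ hξ ↦ haper ξ fun i ↦ hξ i trivial
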